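/- Let Ŝ ∈ W_𝔊 be a symmetric positive semidefinite matrix in the fixed-point subspace and μ ≥ 0, and define f(Θ) = Tr(ŜΘ) − log det(Θ) + μ‖Θ‖_{1,off} on symmetric positive definite matrices. Then for every symmetric positive definite Θ, the Reynolds average P_𝔊(Θ) is also symmetric positive definite and f(P_𝔊(Θ)) ≤ f(Θ). -/

import Mathlib

/-!
The objective `f` is convex and invariant under `Θ ↦ Π_g Θ Π_gᵀ` for `g ∈ 𝔊`, so averaging over `𝔊`
cannot increase it. The trace term is linear, and invariant because `Ŝ` is; the off-diagonal
ℓ₁ norm satisfies the triangle inequality and only depends on the multiset of off-diagonal entries.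

Instead of proving concavity of `log det` in general, the proof uses its tangent-plane inequality
`log det B ≤ log det A + tr(A⁻¹B) − p` (`log_det_le_tangent`) at `A = P_𝔊(Θ)`: summed over the
conjugates `B = Π_g Θ Π_gᵀ`, the trace terms average to `tr(A⁻¹A) = p`, which cancels. The tangent
inequality reduces, by writing `A⁻¹ = LᴴL` and replacing `B` by `L B Lᴴ`, to `A = 1`, where it is
`log x ≤ x − 1` applied to the eigenvalues.
-/

open MeasureTheory ProbabilityTheory Matrix Finset Real

noncomputable section

/-- The `p × p` permutation matrix `Π_σ` of a permutation `σ` of `Fin p`. -/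
def permMatrix {p : ℕ} (σ : Equiv.Perm (Fin p)) : Matrix (Fin p) (Fin p) ℝ :=
  Matrix.of fun i j => if σ j = i then (1 : ℝ) else 0

/-- `M` lies in the fixed-point subspace `W_𝔊`, i.e. `Π_g M Π_gᵀ = M` for all `g ∈ 𝔊`. -/
def IsFixedPoint {p : ℕ} (G : Subgroup (Equiv.Perm (Fin p)))
    (M : Matrix (Fin p) (Fin p) ℝ) : Prop :=
  ∀ g ∈ G, permMatrix g * M * (permMatrix g)ᵀ = M

/-- The Reynolds average `P_𝔊(M) = |𝔊|⁻¹ ∑_{g ∈ 𝔊} Π_g M Π_gᵀ`. -/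
def reynolds {p : ℕ} (G : Subgroup (Equiv.Perm (Fin p))) [Fintype G]
    (M : Matrix (Fin p) (Fin p) ℝ) : Matrix (Fin p) (Fin p) ℝ :=
  (Fintype.card G : ℝ)⁻¹ •
    ∑ g : G, permMatrix (g : Equiv.Perm (Fin p)) * M * (permMatrix (g : Equiv.Perm (Fin p)))ᵀ

/-- The off-diagonal ℓ₁ norm `‖M‖_{1,off} = ∑_{i ≠ j} |M_ij|`. -/
def offDiagL1 {p : ℕ} (M : Matrix (Fin p) (Fin p) ℝ) : ℝ :=
  ∑ i, ∑ j, if i ≠ j then |M i j| else 0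

/-- The ℓ₁-regularized log-determinant objective `Θ ↦ Tr(ŜΘ) − log det Θ + μ ‖Θ‖_{1,off}`. -/
def logDetObjective {p : ℕ} (A : Matrix (Fin p) (Fin p) ℝ) (μ : ℝ)
    (Θ : Matrix (Fin p) (Fin p) ℝ) : ℝ :=
  (A * Θ).trace - Real.log Θ.det + μ * offDiagL1 Θ

theorem permMatrix_conj {p : ℕ} (σ : Equiv.Perm (Fin p)) (M : Matrix (Fin p) (Fin p) ℝ) :
    permMatrix σ * M * (permMatrix σ)ᵀ = M.submatrix σ.symm σ.symm := by
  ext i j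
  simp [Matrix.mul_apply, permMatrix, ← Equiv.eq_symm_apply]

theorem reynolds_eq {p : ℕ} (G : Subgroup (Equiv.Perm (Fin p))) [Fintype G]
    (M : Matrix (Fin p) (Fin p) ℝ) :
    reynolds G M = (Fintype.card G : ℝ)⁻¹ •
      ∑ g : G, M.submatrix (g : Equiv.Perm (Fin p)).symm (g : Equiv.Perm (Fin p)).symm := by
  simp only [reynolds, permMatrix_conj]

theorem trace_submatrix_perm {p : ℕ} (σ : Equiv.Perm (Fin p)) (M : Matrix (Fin p) (Fin p) ℝ) :
    (M.submatrix σ σ).trace = M.trace :=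
  Equiv.sum_comp σ fun i => M i i

theorem offDiagL1_submatrix_perm {p : ℕ} (σ : Equiv.Perm (Fin p))
    (M : Matrix (Fin p) (Fin p) ℝ) : offDiagL1 (M.submatrix σ σ) = offDiagL1 M := by
  unfold offDiagL1
  conv_rhs => rw [← Equiv.sum_comp σ]
  refine Finset.sum_congr rfl fun i _ => ?_
  conv_rhs => rw [← Equiv.sum_comp σ]
  simp

theorem offDiagL1_smul {p : ℕ} (c : ℝ) (M : Matrix (Fin p) (Fin p) ℝ) :
    offDiagL1 (c • M) = |c| * offDiagL1 M := by
  simp [offDiagL1, Finset.mul_sum, abs_mul]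

theorem offDiagL1_sum_le {p : ℕ} {ι : Type*} (s : Finset ι)
    (M : ι → Matrix (Fin p) (Fin p) ℝ) :
    offDiagL1 (∑ k ∈ s, M k) ≤ ∑ k ∈ s, offDiagL1 (M k) := by
  unfold offDiagL1
  rw [Finset.sum_comm (s := s)]
  refine Finset.sum_le_sum fun i _ => ?_
  rw [Finset.sum_comm (s := s)]
  refine Finset.sum_le_sum fun j _ => ?_
  split_ifs
  · rw [Matrix.sum_apply]
    exact Finset.abs_sum_le_sum_abs _ _
  · simp

theorem log_det_le_trace_sub {p : ℕ} {C : Matrix (Fin p) (Fin p) ℝ} (hC : C.PosDef) :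
    Real.log C.det ≤ C.trace - p := by
  have hd := hC.1.det_eq_prod_eigenvalues
  have ht := hC.1.trace_eq_sum_eigenvalues
  simp only [RCLike.ofReal_real_eq_id, id_eq] at hd ht
  rw [hd, ht, Real.log_prod fun i _ => (hC.eigenvalues_pos i).ne']
  calc ∑ i, Real.log (hC.1.eigenvalues i) ≤ ∑ i, (hC.1.eigenvalues i - 1) :=
        Finset.sum_le_sum fun i _ => Real.log_le_sub_one_of_pos (hC.eigenvalues_pos i)
    _ = _ := by simp

open scoped MatrixOrder in
/-- The concave function `log det` lies below its tangent plane at `A`. -/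
theorem log_det_le_tangent {p : ℕ} {A B : Matrix (Fin p) (Fin p) ℝ} (hA : A.PosDef)
    (hB : B.PosDef) : Real.log B.det ≤ Real.log A.det + (A⁻¹ * B).trace - p := by
  obtain ⟨L, hL⟩ := CStarAlgebra.nonneg_iff_eq_star_mul_self.mp hA.inv.posSemidef.nonneg
  rw [Matrix.star_eq_conjTranspose] at hL
  have hdet : A.det⁻¹ = L.det * L.det := by
    have := congrArg Matrix.det hL
    simpa [Matrix.det_nonsing_inv] using this
  have hL0 : L.det ≠ 0 := by
    intro h
    exact inv_ne_zero hA.det_pos.ne' (by rw [hdet, h, zero_mul])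
  have hLu : IsUnit L := (Matrix.isUnit_iff_isUnit_det L).2 hL0.isUnit
  have hC : (L * B * Lᴴ).PosDef :=
    hB.mul_mul_conjTranspose_same (Matrix.vecMul_injective_of_isUnit hLu)
  have h := log_det_le_trace_sub hC
  have h1 : (L * B * Lᴴ).trace = (A⁻¹ * B).trace := by
    rw [hL, Matrix.trace_mul_comm, Matrix.mul_assoc]
  have h2 : (L * B * Lᴴ).det = A.det⁻¹ * B.det := by
    rw [hdet]
    simp
    ring
  rw [h1, h2, Real.log_mul (inv_ne_zero hA.det_pos.ne') hB.det_pos.ne', Real.log_inv] at h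
  linarith

/-- Reynolds averaging does not increase the ℓ₁-regularized log-determinant objective with a
`𝔊`-invariant positive semidefinite input matrix `Ŝ`: for positive definite `Θ`, the
Reynolds average `P_𝔊(Θ)` is positive definite and `f(P_𝔊(Θ)) ≤ f(Θ)`. -/
theorem logDetObjective_reynolds_le
    {p : ℕ} (G : Subgroup (Equiv.Perm (Fin p))) [Fintype G]
    (Shat : Matrix (Fin p) (Fin p) ℝ) (hShat : Shat.PosSemidef)
    (hfix : IsFixedPoint G Shat) (μ : ℝ) (hμ : 0 ≤ μ)
    (Θ : Matrix (Fin p) (Fin p) ℝ) (hΘ : Θ.PosDef) :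
    (reynolds G Θ).PosDef ∧
      logDetObjective Shat μ (reynolds G Θ) ≤ logDetObjective Shat μ Θ := by
  have hcard : (0 : ℝ) < Fintype.card G := by exact_mod_cast Fintype.card_pos
  have hBpd : ∀ g : G, (Θ.submatrix (g : Equiv.Perm (Fin p)).symm
      (g : Equiv.Perm (Fin p)).symm).PosDef := fun g => hΘ.submatrix (Equiv.injective _)
  have hR : (reynolds G Θ).PosDef := by
    rw [reynolds_eq]
    exact (Matrix.posDef_sum Finset.univ_nonempty fun g _ => hBpd g).smul (inv_pos.2 hcard)
  refine ⟨hR, ?_⟩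
  have htr : (Shat * reynolds G Θ).trace = (Shat * Θ).trace := by
    have hg : ∀ g : G, (Shat * Θ.submatrix (g : Equiv.Perm (Fin p)).symm
        (g : Equiv.Perm (Fin p)).symm).trace = (Shat * Θ).trace := by
      intro g
      have hS := hfix g g.2
      rw [permMatrix_conj] at hS
      conv_lhs => rw [← hS]
      rw [Matrix.submatrix_mul_equiv, trace_submatrix_perm]
    rw [reynolds_eq, Matrix.mul_smul, Matrix.trace_smul, Matrix.mul_sum, Matrix.trace_sum,
      Finset.sum_congr rfl fun g _ => hg g]
    simp [hcard.ne']
  have hl1 : offDiagL1 (reynolds G Θ) ≤ offDiagL1 Θ := by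
    rw [reynolds_eq, offDiagL1_smul, abs_of_pos (inv_pos.2 hcard), inv_mul_le_iff₀ hcard]
    refine (offDiagL1_sum_le _ _).trans_eq ?_
    simp [offDiagL1_submatrix_perm]
  have hlog : Real.log Θ.det ≤ Real.log (reynolds G Θ).det := by
    set R := reynolds G Θ with hRdef
    have hsum : ∑ g : G, (R⁻¹ * Θ.submatrix (g : Equiv.Perm (Fin p)).symm
        (g : Equiv.Perm (Fin p)).symm).trace = Fintype.card G * p := by
      have hsR : ∑ g : G, Θ.submatrix (g : Equiv.Perm (Fin p)).symm
          (g : Equiv.Perm (Fin p)).symm = (Fintype.card G : ℝ) • R := by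
        rw [hRdef, reynolds_eq, smul_inv_smul₀ hcard.ne']
      rw [← Matrix.trace_sum, ← Matrix.mul_sum, hsR, Matrix.mul_smul,
        Matrix.nonsing_inv_mul _ hR.det_pos.ne'.isUnit]
      simp
    have key := Finset.sum_le_sum fun (g : G) (_ : g ∈ Finset.univ) =>
      log_det_le_tangent hR (hBpd g)
    simp only [Matrix.det_submatrix_equiv_self, Finset.sum_sub_distrib, Finset.sum_add_distrib,
      hsum, Finset.sum_const, Finset.card_univ, nsmul_eq_mul] at key
    exact le_of_mul_le_mul_left (by linarith) hcard
  unfold logDetObjective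
  rw [htr]
  linarith [mul_le_mul_of_nonneg_left hl1 hμ]

end
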